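/- arXiv:2412.14997 — 2 statements merged into one kernel-verified Lean document; each statement's English description precedes it below -/
import Mathlib

section
/- Fix μ ∈ (1,2) and define f : ℝ → ℝ by f(z) = ((μ−1)/(2μ)) z² if |z| ≤ 1, and f(z) = |z| − (1/(μ(2−μ)))|z|^{2−μ} + (μ−1)/(2(2−μ)) if |z| > 1. Then f is twice continuously differentiable on ℝ, with f'(z) = ((μ−1)/μ) z for |z| ≤ 1 and f'(z) = z/|z| − z/(μ|z|^μ) for |z| > 1, and with f''(z) = (μ−1)/μ for |z| ≤ 1 and f''(z) = ((μ−1)/μ)|z|^{−μ} for |z| > 1. -/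
/-- The model integrand of the one-dimensional counterexample. -/
noncomputable def modelF (μ : ℝ) (z : ℝ) : ℝ :=
  if |z| ≤ 1 then ((μ - 1) / (2 * μ)) * z ^ 2
  else |z| - (1 / (μ * (2 - μ))) * |z| ^ (2 - μ) + (μ - 1) / (2 * (2 - μ))

open Filter Topology in
lemma glue_hasDerivAt {a b a' b' : ℝ → ℝ} (ha : ∀ z, HasDerivAt a (a' z) z)
    (hb : ∀ z, z ≠ 0 → HasDerivAt b (b' z) z) (h0 : ∀ z, |z| = 1 → a z = b z)
    (h1 : ∀ z, |z| = 1 → a' z = b' z) (z : ℝ) :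
    HasDerivAt (fun z => if |z| ≤ 1 then a z else b z) (if |z| ≤ 1 then a' z else b' z) z := by
  rcases lt_trichotomy |z| 1 with h | h | h
  · rw [if_pos h.le]
    refine (ha z).congr_of_eventuallyEq ?_
    filter_upwards [continuous_abs.continuousAt.eventually_lt continuousAt_const h] with y hy
    rw [if_pos hy.le]
  · rw [if_pos h.le]
    have hz : z ≠ 0 := by
      rintro rfl
      simp at h
    have e1 : HasDerivWithinAt (fun z => if |z| ≤ 1 then a z else b z) (a' z) {y | |y| ≤ 1} z :=
      (ha z).hasDerivWithinAt.congr (fun y hy => if_pos hy) (if_pos h.le)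
    have e2 : HasDerivWithinAt (fun z => if |z| ≤ 1 then a z else b z) (a' z) {y | 1 ≤ |y|} z := by
      rw [h1 z h]
      have key : ∀ y : ℝ, 1 ≤ |y| → (if |y| ≤ 1 then a y else b y) = b y := by
        intro y hy
        split_ifs with hh
        · exact h0 y (le_antisymm hh hy)
        · rfl
      exact (hb z hz).hasDerivWithinAt.congr (fun y hy => key y hy) (key z h.ge)
    have e3 := e1.union e2
    have : {y : ℝ | |y| ≤ 1} ∪ {y | 1 ≤ |y|} = Set.univ := by
      ext y
      simp [le_total]
    rwa [this, hasDerivWithinAt_univ] at e3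
  · rw [if_neg h.not_ge]
    have hz : z ≠ 0 := by
      rintro rfl
      simp at h
      linarith
    refine (hb z hz).congr_of_eventuallyEq ?_
    filter_upwards [continuousAt_const.eventually_lt continuous_abs.continuousAt h] with y hy
    rw [if_neg hy.not_ge]

lemma hasDerivAt_abs_div {z : ℝ} (hz : z ≠ 0) : HasDerivAt (fun y : ℝ => |y|) (z / |z|) z := by
  have := hasDerivAt_abs hz
  convert this using 1
  rcases hz.lt_or_gt with h | h
  · simp [abs_of_neg h, h, hz]
  · simp [abs_of_pos h, h, hz]

/-- For `μ ∈ (1,2)` the model integrand `f` is of class `C²` with the stated first and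
second derivatives. -/
theorem modelF_c2_with_derivs (μ : ℝ) (hμ : μ ∈ Set.Ioo (1:ℝ) 2) :
    ContDiff ℝ 2 (modelF μ) ∧
    (∀ z : ℝ, deriv (modelF μ) z =
      if |z| ≤ 1 then ((μ - 1) / μ) * z else z / |z| - z / (μ * |z| ^ μ)) ∧
    (∀ z : ℝ, deriv (deriv (modelF μ)) z =
      if |z| ≤ 1 then (μ - 1) / μ else ((μ - 1) / μ) * |z| ^ (-μ)) := by
  obtain ⟨h1, h2⟩ := hμ
  have hμ0 : μ ≠ 0 := by linarith
  have hμ2 : 2 - μ ≠ 0 := by linarith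
  have D1 : ∀ z : ℝ, HasDerivAt (modelF μ)
      (if |z| ≤ 1 then ((μ - 1) / μ) * z else z / |z| - z / (μ * |z| ^ μ)) z := by
    apply glue_hasDerivAt
    · intro z
      refine ((hasDerivAt_pow 2 z).const_mul ((μ - 1) / (2 * μ))).congr_deriv ?_
      field_simp
      norm_num
    · intro z hz
      have hp : 0 < |z| := abs_pos.2 hz
      have hP : 0 < |z| ^ μ := Real.rpow_pos_of_pos hp μ
      have hA := hasDerivAt_abs_div hz
      have hB := hA.rpow_const (p := 2 - μ) (Or.inl hp.ne')
      refine ((hA.sub (hB.const_mul (1 / (μ * (2 - μ))))).add_const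
        ((μ - 1) / (2 * (2 - μ)))).congr_deriv ?_
      have : |z| ^ (2 - μ - 1) = |z| / |z| ^ μ := by
        rw [show 2 - μ - 1 = 1 - μ by ring, Real.rpow_sub hp, Real.rpow_one]
      rw [this]
      field_simp
    · intro z hz
      rw [← sq_abs, hz]
      simp only [Real.one_rpow]
      field_simp
      ring
    · intro z hz
      rw [hz]
      simp only [Real.one_rpow]
      field_simp
  have d1 : deriv (modelF μ) =
      fun z => if |z| ≤ 1 then ((μ - 1) / μ) * z else z / |z| - z / (μ * |z| ^ μ) :=
    funext fun z => (D1 z).deriv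
  have D2 : ∀ z : ℝ, HasDerivAt (deriv (modelF μ))
      (if |z| ≤ 1 then (μ - 1) / μ else ((μ - 1) / μ) * |z| ^ (-μ)) z := by
    rw [d1]
    apply glue_hasDerivAt (a' := fun _ => (μ - 1) / μ)
      (b' := fun z => ((μ - 1) / μ) * |z| ^ (-μ))
    · intro z
      simpa using (hasDerivAt_id z).const_mul ((μ - 1) / μ)
    · intro z hz
      have hp : 0 < |z| := abs_pos.2 hz
      have hP : 0 < |z| ^ μ := Real.rpow_pos_of_pos hp μ
      have hA := hasDerivAt_abs_div hz
      have hB := hA.rpow_const (p := μ) (Or.inl hp.ne')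
      have hI := hasDerivAt_id' z
      refine ((hI.div hA hp.ne').sub (hI.div (hB.const_mul μ)
        (mul_ne_zero hμ0 hP.ne'))).congr_deriv ?_
      rw [Real.rpow_neg hp.le, Real.rpow_sub_one hp.ne']
      have hs : z ^ 2 = |z| ^ 2 := (sq_abs z).symm
      field_simp
      rw [hs]
      ring
    · intro z hz
      rw [hz]
      simp only [Real.one_rpow]
      field_simp
    · intro z hz
      simp [hz]
  have d2 : deriv (deriv (modelF μ)) =
      fun z => if |z| ≤ 1 then (μ - 1) / μ else ((μ - 1) / μ) * |z| ^ (-μ) :=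
    funext fun z => (D2 z).deriv
  refine ⟨?_, fun z => (D1 z).deriv, fun z => (D2 z).deriv⟩
  have hc : Continuous (deriv (deriv (modelF μ))) := by
    have : deriv (deriv (modelF μ)) = fun z => ((μ - 1) / μ) * (max |z| 1) ^ (-μ) := by
      rw [d2]
      funext z
      split_ifs with h
      · simp [max_eq_right h]
      · rw [max_eq_left (not_le.1 h).le]
    rw [this]
    refine continuous_const.mul (Continuous.rpow_const (by fun_prop) fun z => Or.inl ?_)
    have := le_max_right |z| 1
    positivity
  have c1 : ContDiff ℝ 1 (deriv (modelF μ)) :=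
    contDiff_one_iff_deriv.2 ⟨fun z => (D2 z).differentiableAt, hc⟩
  rw [show (2 : WithTop ℕ∞) = 1 + 1 by norm_num, contDiff_succ_iff_deriv]
  exact ⟨fun z => (D1 z).differentiableAt, by simp, c1⟩
end

section
/- Fix μ ∈ (1,2) and α ∈ (0,1) with μ > 1 + α. Define f : ℝ → ℝ by f(z) = ((μ−1)/(2μ)) z² if |z| ≤ 1, and f(z) = |z| − (1/(μ(2−μ)))|z|^{2−μ} + (μ−1)/(2(2−μ)) if |z| > 1, and the weight w(x) := 1 + |x|^α. Set M₀ := ∫_{−1}^1 (μ(1 − 1/(1+|t|^α)))^{1/(1−μ)} dt, which is finite. Then for every M > M₀, the infimum of the functional 𝒥[v] := ∫_{−1}^1 f(v(t)) w(t) dt over all v ∈ L¹((−1,1); ℝ) with ∫_{−1}^1 v(t) dt = M is not attained; that is, the variational problem ∫_{−1}^1 f(u'(x)) w(x) dx over u ∈ W^{1,1}(−1,1) with u(−1) = 0 and u(1) = M has no minimizer. -/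
open MeasureTheory

lemma modelF_of_ge (μ z : ℝ) (h1 : 1 < μ) (h2 : μ < 2) (hz : 1 ≤ z) :
    modelF μ z = z - (1 / (μ * (2 - μ))) * z ^ (2 - μ) + (μ - 1) / (2 * (2 - μ)) := by
  unfold modelF
  rw [abs_of_pos (by linarith)]
  split_ifs with h
  · have : z = 1 := le_antisymm h hz
    subst this
    have : (2 - μ) ≠ 0 := by linarith
    have : μ ≠ 0 := by linarith
    rw [Real.one_rpow]
    field_simp
    ring
  · rfl

lemma modelF_neg (μ z : ℝ) : modelF μ (-z) = modelF μ z := by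
  unfold modelF
  simp

lemma rpow_tangent (p a z : ℝ) (hp0 : 0 < p) (hp1 : p < 1) (ha : 0 < a) (hz : 0 < z)
    (hne : z ≠ a) : z ^ p < a ^ p + p * a ^ (p - 1) * (z - a) := by
  have h := rpow_one_add_lt_one_add_mul_self (s := z / a - 1) (p := p)
    (by have := div_pos hz ha; linarith)
    (by intro h; apply hne; field_simp at h; linarith) hp0 hp1
  have e : 1 + (z / a - 1) = z / a := by ring
  rw [e, Real.div_rpow hz.le ha.le, div_lt_iff₀ (Real.rpow_pos_of_pos ha p)] at h
  rw [Real.rpow_sub_one ha.ne']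
  calc z ^ p < _ := h
    _ = _ := by field_simp

lemma modelF_tangent (μ a z : ℝ) (h1 : 1 < μ) (h2 : μ < 2) (ha : 1 < a) (hne : z ≠ a) :
    modelF μ a + (1 - a ^ (1 - μ) / μ) * (z - a) < modelF μ z := by
  have hA : ∀ z, 1 ≤ z → z ≠ a →
      modelF μ a + (1 - a ^ (1 - μ) / μ) * (z - a) < modelF μ z := by
    intro z hz hne
    rw [modelF_of_ge μ z h1 h2 hz, modelF_of_ge μ a h1 h2 ha.le]
    have h := rpow_tangent (2 - μ) a z (by linarith) (by linarith) (by linarith) (by linarith) hne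
    rw [show 2 - μ - 1 = 1 - μ by ring] at h
    have hk : 0 < 1 / (μ * (2 - μ)) := by
      have : 0 < 2 - μ := by linarith
      positivity
    have h' := mul_lt_mul_of_pos_left h hk
    have e : 1 / (μ * (2 - μ)) * (a ^ (2 - μ) + (2 - μ) * a ^ (1 - μ) * (z - a))
      = 1 / (μ * (2 - μ)) * a ^ (2 - μ) + a ^ (1 - μ) / μ * (z - a) := by
      have : 2 - μ ≠ 0 := by linarith
      field_simp
    rw [e] at h'
    linarith
  have hs : (μ - 1) / μ ≤ 1 - a ^ (1 - μ) / μ := by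
    have : a ^ (1 - μ) ≤ 1 := Real.rpow_le_one_of_one_le_of_nonpos ha.le (by linarith)
    have hμ : 0 < μ := by linarith
    have h3 : a ^ (1 - μ) / μ ≤ 1 / μ := by gcongr
    have : (μ - 1) / μ = 1 - 1 / μ := by field_simp
    linarith
  have hm : 0 < (μ - 1) / μ := div_pos (by linarith) (by linarith)
  rcases le_total 1 z with hz | hz
  · exact hA z hz hne
  rcases le_or_gt (-1) z with hz' | hz'
  · have h := hA 1 le_rfl ha.ne
    have e1 : ∀ y, |y| ≤ 1 → modelF μ y = (μ - 1) / μ * (y ^ 2 / 2) := by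
      intro y hy
      unfold modelF
      rw [if_pos hy]
      field_simp
    rw [e1 1 (by simp)] at h
    rw [e1 z (abs_le.2 ⟨hz', hz⟩)]
    nlinarith [mul_nonneg (sub_nonneg.2 hs) (sub_nonneg.2 hz), mul_nonneg hm.le (sq_nonneg (z - 1))]
  · rcases eq_or_ne (-z) a with h | h
    · rw [← modelF_neg μ z, h]
      have : 0 < 1 - a ^ (1 - μ) / μ := by linarith
      nlinarith
    · have h3 := hA (-z) (by linarith) h
      rw [modelF_neg] at h3
      nlinarith

lemma modelF_add (μ z c : ℝ) (h1 : 1 < μ) (h2 : μ < 2) (hz : 1 ≤ z) (hc : 0 ≤ c) :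
    modelF μ (z + c) ≤ modelF μ z + c := by
  rw [modelF_of_ge μ z h1 h2 hz, modelF_of_ge μ (z + c) h1 h2 (by linarith)]
  have h : z ^ (2 - μ) ≤ (z + c) ^ (2 - μ) :=
    Real.rpow_le_rpow (by linarith) (by linarith) (by linarith)
  have hk : 0 < 1 / (μ * (2 - μ)) := by
    have : 0 < 2 - μ := by linarith
    positivity
  nlinarith

lemma modelF_measurable (μ : ℝ) : Measurable (modelF μ) := by
  unfold modelF
  refine Measurable.ite (measurableSet_le (by fun_prop) (by fun_prop)) (by fun_prop) ?_
  fun_prop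

lemma modelF_bound (μ : ℝ) (h1 : 1 < μ) (h2 : μ < 2) :
    ∃ C, 0 ≤ C ∧ ∀ z, |modelF μ z| ≤ C * (|z| + 1) := by
  have hk : 0 < 1 / (μ * (2 - μ)) := by
    have : 0 < 2 - μ := by linarith
    positivity
  have hm : 0 < (μ - 1) / (2 * μ) := div_pos (by linarith) (by linarith)
  have hn : 0 < (μ - 1) / (2 * (2 - μ)) := div_pos (by linarith) (by linarith)
  refine ⟨(μ - 1) / (2 * μ) + 1 + 1 / (μ * (2 - μ)) + (μ - 1) / (2 * (2 - μ)), by linarith, ?_⟩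
  intro z
  unfold modelF
  generalize 1 / (μ * (2 - μ)) = k at *
  generalize (μ - 1) / (2 * (2 - μ)) = n at *
  generalize (μ - 1) / (2 * μ) = m at *
  have hz := abs_nonneg z
  split_ifs with h
  · rw [abs_of_nonneg (by positivity), ← sq_abs]
    have : |z| ^ 2 ≤ 1 := by nlinarith
    nlinarith [mul_nonneg hm.le hz, mul_nonneg hk.le hz, mul_nonneg hn.le hz]
  · have h5 : |z| ^ (2 - μ) ≤ |z| := by
      conv_rhs => rw [← Real.rpow_one |z|]
      exact Real.rpow_le_rpow_of_exponent_le (by linarith) (by linarith)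
    have h6 : 0 ≤ |z| ^ (2 - μ) := by positivity
    have := mul_le_mul_of_nonneg_left h5 hk.le
    have := mul_nonneg hk.le h6
    have := mul_nonneg hm.le hz
    have := mul_nonneg hk.le hz
    have := mul_nonneg hn.le hz
    rw [abs_le]
    constructor <;> nlinarith

lemma modelF_integrable (μ α : ℝ) (h1 : 1 < μ) (h2 : μ < 2) (hα : 0 < α) (v : ℝ → ℝ)
    (hv : IntegrableOn v (Set.Ioo (-1:ℝ) 1)) :
    IntegrableOn (fun t => modelF μ (v t) * (1 + |t| ^ α)) (Set.Ioo (-1:ℝ) 1) := by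
  obtain ⟨C, hC, hb⟩ := modelF_bound μ h1 h2
  have hc : IntegrableOn (fun _ : ℝ => (1:ℝ)) (Set.Ioo (-1:ℝ) 1) :=
    integrableOn_const (by simp)
  have hi : IntegrableOn (fun t => C * (|v t| + 1) * 2) (Set.Ioo (-1:ℝ) 1) :=
    ((hv.abs.add hc).const_mul C).mul_const 2
  refine Integrable.mono' hi ?_ ?_
  · have hw : Measurable (fun t : ℝ => 1 + |t| ^ α) := by fun_prop
    exact ((modelF_measurable μ).comp_aemeasurable hv.aemeasurable).aestronglyMeasurable.mul
      hw.aestronglyMeasurable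
  · filter_upwards [ae_restrict_mem measurableSet_Ioo] with t ht
    have ha : |t| ^ α ≤ 1 :=
      Real.rpow_le_one (abs_nonneg t) (abs_le.2 ⟨ht.1.le, ht.2.le⟩) hα.le
    have hp : 0 ≤ |t| ^ α := by positivity
    rw [Real.norm_eq_abs, abs_mul, abs_of_nonneg (a := 1 + |t| ^ α) (by linarith)]
    exact mul_le_mul (hb _) (by linarith) (by linarith) (by positivity)

/-- the profile `g` -/
lemma g_integrable (μ α : ℝ) (h1 : 1 < μ) (hα : 0 < α) (hμα : 1 + α < μ) :
    IntegrableOn (fun t : ℝ => (μ * (1 - 1 / (1 + |t| ^ α))) ^ (1 / (1 - μ)))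
      (Set.Ioo (-1:ℝ) 1) := by
  have hq : -1 < α * (1 / (1 - μ)) := by
    rw [show α * (1 / (1 - μ)) = -(α / (μ - 1)) by
      rw [show 1 - μ = -(μ - 1) by ring, div_neg]; ring]
    have : α / (μ - 1) < 1 := by rw [div_lt_one] <;> linarith
    linarith
  have hI0 : IntegrableOn (fun t : ℝ => t ^ (α * (1 / (1 - μ)))) (Set.Ioc (0:ℝ) 1) := by
    have := intervalIntegral.intervalIntegrable_rpow' (a := 0) (b := 1) hq
    rwa [intervalIntegrable_iff_integrableOn_Ioc_of_le zero_le_one] at this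
  have hI1 : IntegrableOn (fun t : ℝ => |t| ^ (α * (1 / (1 - μ)))) (Set.Ioc (0:ℝ) 1) := by
    refine hI0.congr_fun ?_ measurableSet_Ioc
    intro t ht
    simp only [abs_of_pos ht.1]
  have hI2 : IntegrableOn (fun t : ℝ => |t| ^ (α * (1 / (1 - μ)))) (Set.Ico (-1:ℝ) 0) := by
    have := hI1.comp_neg
    simpa using this
  have hI : IntegrableOn (fun t : ℝ => |t| ^ (α * (1 / (1 - μ)))) (Set.Ioo (-1:ℝ) 1) := by
    have h3 : IntegrableOn (fun t : ℝ => |t| ^ (α * (1 / (1 - μ)))) {(0:ℝ)} :=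
      integrableOn_singleton (by simp) (hx := by simp)
    refine ((hI1.union hI2).union h3).mono_set ?_
    intro t ht
    rcases lt_trichotomy t 0 with h | h | h
    · exact Or.inl (Or.inr ⟨ht.1.le, h⟩)
    · exact Or.inr h
    · exact Or.inl (Or.inl ⟨h, ht.2.le⟩)
  refine Integrable.mono' (hI.const_mul ((μ / 2) ^ (1 / (1 - μ)))) ?_ ?_
  · refine Measurable.aestronglyMeasurable ?_
    fun_prop
  · filter_upwards [ae_restrict_mem measurableSet_Ioo,
      ae_restrict_of_ae (Measure.ae_ne volume (0:ℝ))] with t ht h0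
    have hpos : 0 < |t| := abs_pos.2 h0
    have hs : 0 < |t| ^ α := Real.rpow_pos_of_pos hpos α
    have ha : |t| ^ α ≤ 1 :=
      Real.rpow_le_one (abs_nonneg t) (abs_le.2 ⟨ht.1.le, ht.2.le⟩) hα.le
    have hl : μ / 2 * |t| ^ α ≤ μ * (1 - 1 / (1 + |t| ^ α)) := by
      have : |t| ^ α / 2 ≤ 1 - 1 / (1 + |t| ^ α) := by
        rw [show 1 - 1 / (1 + |t| ^ α) = |t| ^ α / (1 + |t| ^ α) by field_simp; ring]
        gcongr
        linarith
      nlinarith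
    have hl0 : 0 < μ / 2 * |t| ^ α := by positivity
    rw [Real.norm_eq_abs, abs_of_nonneg (Real.rpow_nonneg (by linarith) _), Real.rpow_mul hpos.le,
      ← Real.mul_rpow (by linarith) hs.le]
    exact Real.rpow_le_rpow_of_nonpos hl0 hl (by
      rw [one_div]; exact (inv_lt_zero.2 (by linarith)).le)

lemma g_prop (μ α t : ℝ) (h1 : 1 < μ) (h2 : μ < 2) (hα : 0 < α) (ht : t ∈ Set.Ioo (-1:ℝ) 1)
    (h0 : t ≠ 0) :
    1 < (μ * (1 - 1 / (1 + |t| ^ α))) ^ (1 / (1 - μ)) ∧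
    1 - ((μ * (1 - 1 / (1 + |t| ^ α))) ^ (1 / (1 - μ))) ^ (1 - μ) / μ = 1 / (1 + |t| ^ α) := by
  have hs : 0 < |t| ^ α := Real.rpow_pos_of_pos (abs_pos.2 h0) α
  have ha : |t| ^ α ≤ 1 :=
    Real.rpow_le_one (abs_nonneg t) (abs_le.2 ⟨ht.1.le, ht.2.le⟩) hα.le
  have e : 1 - 1 / (1 + |t| ^ α) = |t| ^ α / (1 + |t| ^ α) := by field_simp; ring
  have hp : 0 < 1 - 1 / (1 + |t| ^ α) := by rw [e]; positivity
  have hh : 1 - 1 / (1 + |t| ^ α) ≤ 1 / 2 := by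
    rw [e, div_le_iff₀ (by linarith)]; linarith
  have hb : 0 < μ * (1 - 1 / (1 + |t| ^ α)) := by positivity
  constructor
  · refine Real.one_lt_rpow_of_pos_of_lt_one_of_neg hb (by nlinarith) ?_
    rw [one_div]; exact inv_lt_zero.2 (by linarith)
  · rw [← Real.rpow_mul hb.le, one_div_mul_cancel (by linarith), Real.rpow_one]
    rw [mul_div_cancel_left₀ _ (by linarith : μ ≠ 0)]
    ring

/-- **Non-attainment in the one-dimensional counterexample.** For `μ ∈ (1,2)`, `α ∈ (0,1)`
with `μ > 1 + α`, the threshold `M₀ = ∫_{-1}^1 (μ(1 - 1/(1+|t|^α)))^{1/(1-μ)} dt` is finite,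
and for every `M > M₀` the functional `𝒥[v] = ∫_{-1}^1 f(v(t))(1+|t|^α) dt` has no minimizer
among `v ∈ L¹((-1,1))` with `∫_{-1}^1 v = M`; equivalently, the variational problem
`∫_{-1}^1 f(u'(x))(1+|x|^α) dx` over `u ∈ W^{1,1}(-1,1)` with `u(-1) = 0`, `u(1) = M`
(parametrized by `v = u'`) has no minimizer. -/
theorem no_minimizer_above_threshold (μ α : ℝ) (hμ : μ ∈ Set.Ioo (1:ℝ) 2)
    (hα : α ∈ Set.Ioo (0:ℝ) 1) (hμα : 1 + α < μ) (M : ℝ)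
    (hM : (∫ t in Set.Ioo (-1:ℝ) 1, (μ * (1 - 1 / (1 + |t| ^ α))) ^ (1 / (1 - μ))) < M) :
    IntegrableOn (fun t : ℝ => (μ * (1 - 1 / (1 + |t| ^ α))) ^ (1 / (1 - μ)))
      (Set.Ioo (-1:ℝ) 1) ∧
    ¬ ∃ v : ℝ → ℝ, IntegrableOn v (Set.Ioo (-1:ℝ) 1) ∧
        (∫ t in Set.Ioo (-1:ℝ) 1, v t) = M ∧
        ∀ v' : ℝ → ℝ, IntegrableOn v' (Set.Ioo (-1:ℝ) 1) →
          (∫ t in Set.Ioo (-1:ℝ) 1, v' t) = M →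
          (∫ t in Set.Ioo (-1:ℝ) 1, modelF μ (v t) * (1 + |t| ^ α))
            ≤ ∫ t in Set.Ioo (-1:ℝ) 1, modelF μ (v' t) * (1 + |t| ^ α) := by
  obtain ⟨h1, h2⟩ := hμ
  obtain ⟨hα0, hα1⟩ := hα
  have hg := g_integrable μ α h1 hα0 hμα
  have hgp := fun t => g_prop μ α t h1 h2 hα0
  refine ⟨hg, ?_⟩
  generalize hgdef : (fun t : ℝ => (μ * (1 - 1 / (1 + |t| ^ α))) ^ (1 / (1 - μ))) = g at hg hM
  have hgt : ∀ t, (μ * (1 - 1 / (1 + |t| ^ α))) ^ (1 / (1 - μ)) = g t := fun t => congrFun hgdef t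
  simp only [hgt] at hgp
  rintro ⟨v, hv, hvM, hmin⟩
  set S := Set.Ioo (-1:ℝ) 1 with hS
  have hJg := modelF_integrable μ α h1 h2 hα0 g hg
  have hJv := modelF_integrable μ α h1 h2 hα0 v hv
  set M₀ := ∫ t in S, g t with hM₀
  have hae : ∀ᵐ t ∂(volume.restrict S), t ∈ S ∧ t ≠ 0 := by
    filter_upwards [ae_restrict_mem measurableSet_Ioo,
      ae_restrict_of_ae (Measure.ae_ne volume (0:ℝ))] with t ht h0 using ⟨ht, h0⟩
  -- upper bound
  have hup : ∀ ε ∈ Set.Ioo (0:ℝ) 1, (∫ t in S, modelF μ (v t) * (1 + |t| ^ α)) ≤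
      (∫ t in S, modelF μ (g t) * (1 + |t| ^ α)) + (M - M₀) * (1 + ε) := by
    intro ε hε
    set h := ε ^ (1 / α) with hh
    have hh0 : 0 < h := Real.rpow_pos_of_pos hε.1 _
    have hh1 : h < 1 := Real.rpow_lt_one hε.1.le hε.2 (by positivity)
    have hhα : h ^ α = ε := by
      rw [hh, ← Real.rpow_mul hε.1.le, one_div_mul_cancel hα0.ne', Real.rpow_one]
    set c := (M - M₀) / (2 * h) with hc
    have hc0 : 0 < c := div_pos (by linarith) (by linarith)
    have hsub : Set.Ioo (-h) h ⊆ S := Set.Ioo_subset_Ioo (by linarith) hh1.le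
    have hind : ∀ k : ℝ, IntegrableOn ((Set.Ioo (-h) h).indicator (fun _ => k)) S ∧
        ∫ t in S, (Set.Ioo (-h) h).indicator (fun _ => k) t = 2 * h * k := by
      intro k
      constructor
      · refine Integrable.indicator ?_ measurableSet_Ioo
        exact integrableOn_const (by simp [hS])
      · rw [setIntegral_indicator measurableSet_Ioo, Set.inter_eq_right.2 hsub]
        simp [Measure.real, hh0.le]
        left
        ring
    obtain ⟨hi1, hi2⟩ := hind c
    obtain ⟨hj1, hj2⟩ := hind (c * (1 + ε))
    have hv'i : IntegrableOn (fun t => g t + (Set.Ioo (-h) h).indicator (fun _ => c) t) S :=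
      hg.add hi1
    refine (hmin _ hv'i ?_).trans ?_
    · rw [integral_add hg hi1, hi2, hc]
      field_simp
      ring
    · have e : (M - M₀) * (1 + ε) = 2 * h * (c * (1 + ε)) := by
        rw [hc]; field_simp
      rw [e, ← hj2, ← integral_add hJg hj1]
      refine integral_mono_ae (modelF_integrable μ α h1 h2 hα0 _ hv'i) (hJg.add hj1) ?_
      filter_upwards [hae] with t ht
      have hg1 := (hgp t ht.1 ht.2).1
      by_cases hth : t ∈ Set.Ioo (-h) h
      · simp only [Set.indicator_of_mem hth, Pi.add_apply]
        have hF := modelF_add μ (g t) c h1 h2 hg1.le hc0.le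
        have hw : |t| ^ α ≤ ε := by
          rw [← hhα]
          exact Real.rpow_le_rpow (abs_nonneg t) (abs_le.2 ⟨hth.1.le, hth.2.le⟩) hα0.le
        have hw0 : 0 ≤ |t| ^ α := by positivity
        have := mul_le_mul_of_nonneg_right hF (by linarith : 0 ≤ 1 + |t| ^ α)
        have := mul_le_mul_of_nonneg_left hw hc0.le
        nlinarith
      · simp [Set.indicator_of_notMem hth]
  have hup' : (∫ t in S, modelF μ (v t) * (1 + |t| ^ α)) ≤
      (∫ t in S, modelF μ (g t) * (1 + |t| ^ α)) + (M - M₀) := by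
    by_contra! hcon
    set d := (∫ t in S, modelF μ (v t) * (1 + |t| ^ α)) -
      ((∫ t in S, modelF μ (g t) * (1 + |t| ^ α)) + (M - M₀)) with hd
    have hd0 : 0 < d := by linarith
    have hδ : 0 < M - M₀ := by linarith
    have hu := hup (min (1 / 2) (d / (2 * (M - M₀))))
      ⟨by positivity, lt_of_le_of_lt (min_le_left _ _) (by norm_num)⟩
    have h3 : (M - M₀) * min (1 / 2) (d / (2 * (M - M₀))) ≤ d / 2 := by
      refine (mul_le_mul_of_nonneg_left (min_le_right _ _) hδ.le).trans (le_of_eq ?_)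
      field_simp
    linarith
  -- strictness
  have hpt : ∀ t, t ∈ S → t ≠ 0 → v t ≠ g t → 0 <
      modelF μ (v t) * (1 + |t| ^ α) - modelF μ (g t) * (1 + |t| ^ α) - (v t - g t) := by
    intro t ht h0 hne
    obtain ⟨hg1, hg2⟩ := hgp t ht h0
    have hT := modelF_tangent μ (g t) (v t) h1 h2 hg1 hne
    rw [hg2] at hT
    have hw : 0 < 1 + |t| ^ α := by positivity
    have h4 := mul_lt_mul_of_pos_right hT hw
    have e : (modelF μ (g t) + 1 / (1 + |t| ^ α) * (v t - g t)) * (1 + |t| ^ α) =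
      modelF μ (g t) * (1 + |t| ^ α) + (v t - g t) := by field_simp
    rw [e] at h4
    linarith
  have hD1 : IntegrableOn (fun t => modelF μ (v t) * (1 + |t| ^ α) -
      modelF μ (g t) * (1 + |t| ^ α)) S := hJv.sub hJg
  have hD2 : IntegrableOn (fun t => v t - g t) S := hv.sub hg
  have hD : IntegrableOn (fun t => modelF μ (v t) * (1 + |t| ^ α) -
      modelF μ (g t) * (1 + |t| ^ α) - (v t - g t)) S := hD1.sub hD2
  have hDnn : 0 ≤ᵐ[volume.restrict S] (fun t => modelF μ (v t) * (1 + |t| ^ α) -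
      modelF μ (g t) * (1 + |t| ^ α) - (v t - g t)) := by
    filter_upwards [hae] with t ht
    by_cases hne : v t = g t
    · simp [hne]
    · exact (hpt t ht.1 ht.2 hne).le
  have hDi : ∫ t in S, (modelF μ (v t) * (1 + |t| ^ α) -
      modelF μ (g t) * (1 + |t| ^ α) - (v t - g t)) = 0 := by
    refine le_antisymm ?_ (integral_nonneg_of_ae hDnn)
    rw [integral_sub hD1 hD2, integral_sub hJv hJg, integral_sub hv hg, hvM]
    linarith
  rw [integral_eq_zero_iff_of_nonneg_ae hDnn hD] at hDi
  have hvg : v =ᵐ[volume.restrict S] g := by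
    filter_upwards [hae, hDi] with t ht hz
    by_contra hne
    have := hpt t ht.1 ht.2 hne
    simp only [Pi.zero_apply] at hz
    linarith
  have := integral_congr_ae hvg
  rw [hvM] at this
  linarith
end
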